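/- Let n ≥ 1, let q ≥ 1 be a real number, and let x_1,…,x_n be positive reals with x_1+⋯+x_n = 1. Then the q-Tsetlin library operator T_{S_n}(q,x) has a unique stationary distribution Ψ(q,x), and for every permutation π ∈ S_n its component at π equals Ψ(q,x)_π = q^{−inv(π)} · [∏_{k=1, k∈LRM(π)}^{n−1} κ(π_k;x)] · [∏_{k=1, k∉LRM(π)}^{n−1} ( κ(π_{p_k},…,π_k;x) − q^{−1}·κ(π_{p_k},…,π_{k−1};x) )] / ∏_{k=1}^{n−1} ( κ(w_0;x) − q^{k−n−1}·κ(π_1,…,π_{k−1};x) ). -/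

import Mathlib

/-!
STATEMENT 0: stationary distribution of the q-Tsetlin library on permutations.
-/

open scoped Classical

noncomputable section

namespace QTsetlin

variable {K : Type} [Field K]

/-- Number of inversions of a permutation (one-line notation `i ↦ π i`). -/
def invCount {n : ℕ} (π : Equiv.Perm (Fin n)) : ℕ :=
  (Finset.univ.filter fun p : Fin n × Fin n => p.1 < p.2 ∧ π p.2 < π p.1).card

/-- Matrix (row convention: row `π` is `π · T_{k+1}`) of the Hecke generator `T_{k+1}`
(paper indexing), which swaps the (0-based) positions `k` and `k+1`. -/
def genMat (n : ℕ) (q : K) (k : ℕ) :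
    Matrix (Equiv.Perm (Fin n)) (Equiv.Perm (Fin n)) K := fun π σ =>
  if h : k + 1 < n then
    if π ⟨k + 1, h⟩ < π ⟨k, Nat.lt_of_succ_lt h⟩ then
      (if σ = π * Equiv.swap ⟨k, Nat.lt_of_succ_lt h⟩ ⟨k + 1, h⟩ then q else 0)
    else
      (if σ = π * Equiv.swap ⟨k, Nat.lt_of_succ_lt h⟩ ⟨k + 1, h⟩ then 1 else 0)
        + (if σ = π then q - 1 else 0)
  else 0

/-- Matrix of the product `T_k T_{k-1} ⋯ T_1` (paper indexing); `prodGen 0 = 1`. -/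
def prodGen (n : ℕ) (q : K) : ℕ → Matrix (Equiv.Perm (Fin n)) (Equiv.Perm (Fin n)) K
  | 0 => 1
  | k + 1 => genMat n q k * prodGen n q k

/-- Matrix of the weighting operator `X_{S_n}(q,x)`: `π ↦ (x_{π_1}/q^{n-π_1}) · π`. -/
def XSn (n : ℕ) (q : K) (x : Fin n → K) :
    Matrix (Equiv.Perm (Fin n)) (Equiv.Perm (Fin n)) K := fun π σ =>
  if σ = π then
    (if h : 0 < n then x (π ⟨0, h⟩) / q ^ (n - 1 - (π ⟨0, h⟩ : ℕ)) else 0)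
  else 0

/-- Matrix of the q-Tsetlin library operator
`T_{S_n}(q,x) = (∑_{i=1}^n T_{i-1} ⋯ T_1) ∘ X_{S_n}(q,x)` on `ℂS_n` (row convention). -/
def TSn (n : ℕ) (q : K) (x : Fin n → K) :
    Matrix (Equiv.Perm (Fin n)) (Equiv.Perm (Fin n)) K :=
  (∑ k ∈ Finset.range n, prodGen n q k) * XSn n q x

/-- `κ(b; x)`: sort the tuple `b` weakly decreasingly, obtaining `(b_1 ≥ ⋯ ≥ b_k)`, and form
`∑_i x_{b_i} q^{i + b_i - k - 1}` (1-based positions and values; here values are 0-based). -/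
def kappa {n : ℕ} (q : K) (x : Fin n → K) (b : List (Fin n)) : K :=
  let s := b.insertionSort (fun a c => c ≤ a)
  ∑ i : Fin s.length, x (s.get i) * q ^ ((i : ℤ) + ((s.get i : ℕ) + 1) - s.length)

/-- `k` is the (0-based) position of a left-to-right minimum of `π`. -/
def isLRM {n : ℕ} (π : Equiv.Perm (Fin n)) (k : Fin n) : Prop :=
  ∀ i : Fin n, i < k → π k < π i

/-- `p_k`: the smallest (0-based) position `i < k` with `π_i < π_k`. -/
def pMin {n : ℕ} (π : Equiv.Perm (Fin n)) (k : Fin n) : ℕ :=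
  sInf {i : ℕ | ∃ h : i < n, (⟨i, h⟩ : Fin n) < k ∧ π ⟨i, h⟩ < π k}

/-- The tuple of values `(π_{p_k}, …, π_k)`. -/
def segTo {n : ℕ} (π : Equiv.Perm (Fin n)) (k : Fin n) : List (Fin n) :=
  ((List.finRange n).filter fun i : Fin n =>
    decide (pMin π k ≤ (i : ℕ) ∧ (i : ℕ) ≤ (k : ℕ))).map π

/-- The tuple of values `(π_{p_k}, …, π_{k-1})`. -/
def segBefore {n : ℕ} (π : Equiv.Perm (Fin n)) (k : Fin n) : List (Fin n) :=
  ((List.finRange n).filter fun i : Fin n =>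
    decide (pMin π k ≤ (i : ℕ) ∧ (i : ℕ) < (k : ℕ))).map π

/-- The tuple of values `(π_1, …, π_{k-1})` when `k` is the (0-based) position `k`
(i.e. the values at positions strictly before `k`). -/
def prefixVals {n : ℕ} (π : Equiv.Perm (Fin n)) (k : Fin n) : List (Fin n) :=
  ((List.finRange n).filter fun i : Fin n => decide (i < k)).map π

/-- The claimed formula for the stationary distribution of the q-Tsetlin library on
permutations.  Note `List.finRange n` is the tuple of all values, whose weakly decreasing
rearrangement is the long permutation `w₀`, so `kappa q x (List.finRange n) = κ(w₀; x)`.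
Products over `k` with `(k : ℕ) + 1 < n` correspond to the paper's `k = 1, …, n-1`. -/
def psiFormula (n : ℕ) (q : K) (x : Fin n → K) (π : Equiv.Perm (Fin n)) : K :=
  q ^ (-(invCount π : ℤ)) *
    ((∏ k ∈ Finset.univ.filter fun k : Fin n => (k : ℕ) + 1 < n ∧ isLRM π k,
        kappa q x [π k]) *
      (∏ k ∈ Finset.univ.filter fun k : Fin n => (k : ℕ) + 1 < n ∧ ¬ isLRM π k,
        (kappa q x (segTo π k) - q⁻¹ * kappa q x (segBefore π k)))) /
    (∏ k ∈ Finset.univ.filter fun k : Fin n => (k : ℕ) + 1 < n,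
      (kappa q x (List.finRange n) - q ^ (((k : ℕ) : ℤ) - (n : ℤ)) * kappa q x (prefixVals π k)))

/-- `Ψ` is a stationary distribution for the Markov chain with (row-convention) transition
matrix `T` and total rate `c`: it is a nonnegative row vector with entries summing to `1`
such that `Ψ · T = c · Ψ`. -/
def IsStationary {P : Type} [Fintype P] (T : Matrix P P ℝ) (c : ℝ) (Ψ : P → ℝ) : Prop :=
  (∀ p, 0 ≤ Ψ p) ∧ (∑ p, Ψ p = 1) ∧ Matrix.vecMul Ψ T = c • Ψ


/-! ### Proof -/

section Alg

variable {n : ℕ}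

def gapC (P : Finset (Fin n)) (b a : Fin n) : ℕ :=
  (Finset.univ.filter fun c : Fin n => c ∉ P ∧ b < c ∧ c < a).card

def topC (P : Finset (Fin n)) (b : Fin n) : ℕ :=
  (Finset.univ.filter fun c : Fin n => c ∉ P ∧ b < c).card

def numN (t : ℝ) (x : Fin n → ℝ) (P : Finset (Fin n)) (a : Fin n) : ℝ :=
  x a + (1 - t) * ∑ b ∈ P, if b < a then x b * t ^ gapC P b a else 0

def denD (t : ℝ) (x : Fin n → ℝ) (P : Finset (Fin n)) : ℝ :=
  1 - ∑ b ∈ P, x b * t ^ topC P b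

lemma topC_split (P : Finset (Fin n)) (b h : Fin n) (hb : b < h) (hh : h ∉ P) :
    topC P b = gapC P b h + 1 + topC P h := by
  unfold topC gapC
  have e : (Finset.univ.filter fun c : Fin n => c ∉ P ∧ b < c) =
      insert h (Finset.univ.filter fun c : Fin n => c ∉ P ∧ b < c ∧ c < h) ∪
        (Finset.univ.filter fun c : Fin n => c ∉ P ∧ h < c) := by
    ext c; simp only [Finset.mem_filter, Finset.mem_univ, true_and, Finset.mem_union,
      Finset.mem_insert]
    grind
  rw [e, Finset.card_union_of_disjoint, Finset.card_insert_of_notMem]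
  · simp
  · rw [Finset.disjoint_left]; intro c; simp; grind

lemma gapC_split (P : Finset (Fin n)) (b h a : Fin n) (hb : b < h) (ha : h < a) (hh : h ∉ P) :
    gapC P b a = gapC P b h + 1 + gapC P h a := by
  unfold gapC
  have e : (Finset.univ.filter fun c : Fin n => c ∉ P ∧ b < c ∧ c < a) =
      insert h (Finset.univ.filter fun c : Fin n => c ∉ P ∧ b < c ∧ c < h) ∪
        (Finset.univ.filter fun c : Fin n => c ∉ P ∧ h < c ∧ c < a) := by
    ext c; simp only [Finset.mem_filter, Finset.mem_univ, true_and, Finset.mem_union,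
      Finset.mem_insert]
    grind
  rw [e, Finset.card_union_of_disjoint, Finset.card_insert_of_notMem]
  · simp
  · rw [Finset.disjoint_left]; intro c; simp; grind

lemma topC_insert_of_le (P : Finset (Fin n)) (b h : Fin n) (hb : h ≤ b) :
    topC (insert h P) b = topC P b := by
  unfold topC; congr 1; ext c; simp; grind

lemma gapC_insert_of_le (P : Finset (Fin n)) (b h a : Fin n) (hb : h ≤ b) :
    gapC (insert h P) b a = gapC P b a := by
  unfold gapC; congr 1; ext c; simp; grind

lemma gapC_insert_of_ge (P : Finset (Fin n)) (b h a : Fin n) (hb : a ≤ h) :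
    gapC (insert h P) b a = gapC P b a := by
  unfold gapC; congr 1; ext c; simp; grind

lemma topC_insert_of_lt (P : Finset (Fin n)) (b h : Fin n) (hb : b < h) (hh : h ∉ P) :
    topC (insert h P) b = gapC P b h + topC P h := by
  unfold topC gapC
  rw [← Finset.card_union_of_disjoint]
  · congr 1; ext c; simp; grind
  · rw [Finset.disjoint_left]; intro c; simp; grind

lemma gapC_insert_of_lt (P : Finset (Fin n)) (b h a : Fin n) (hb : b < h) (ha : h < a)
    (hh : h ∉ P) :
    gapC (insert h P) b a = gapC P b h + gapC P h a := by
  unfold gapC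
  rw [← Finset.card_union_of_disjoint]
  · congr 1; ext c; simp; grind
  · rw [Finset.disjoint_left]; intro c; simp; grind

lemma denD_insert (t : ℝ) (x : Fin n → ℝ) (P : Finset (Fin n)) (h : Fin n) (hh : h ∉ P) :
    denD t x (insert h P) = denD t x P - t ^ topC P h * numN t x P h := by
  unfold denD numN
  rw [Finset.sum_insert hh, topC_insert_of_le _ _ _ le_rfl]
  have : ∑ b ∈ P, x b * t ^ topC (insert h P) b = ∑ b ∈ P, x b * t ^ topC P b
      + t ^ topC P h * ((1 - t) * ∑ b ∈ P, if b < h then x b * t ^ gapC P b h else 0) := by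
    rw [Finset.mul_sum, Finset.mul_sum, ← Finset.sum_add_distrib]
    refine Finset.sum_congr rfl fun b hb => ?_
    split_ifs with hlt
    · rw [topC_insert_of_lt _ _ _ hlt hh, topC_split _ _ _ hlt hh]; ring
    · rw [topC_insert_of_le _ _ _ (not_lt.1 hlt)]; ring
  rw [this]; ring

lemma numN_insert_lt (t : ℝ) (x : Fin n → ℝ) (P : Finset (Fin n)) (h a : Fin n) (hh : h ∉ P)
    (hlt : h < a) :
    numN t x (insert h P) a = numN t x P a + (1 - t) * t ^ gapC P h a * numN t x P h := by
  unfold numN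
  rw [Finset.sum_insert hh, if_pos hlt, gapC_insert_of_le _ _ _ _ le_rfl]
  have : (∑ b ∈ P, if b < a then x b * t ^ gapC (insert h P) b a else 0)
      = (∑ b ∈ P, if b < a then x b * t ^ gapC P b a else 0)
      + t ^ gapC P h a * ((1 - t) * ∑ b ∈ P, if b < h then x b * t ^ gapC P b h else 0) := by
    rw [Finset.mul_sum, Finset.mul_sum, ← Finset.sum_add_distrib]
    refine Finset.sum_congr rfl fun b hb => ?_
    by_cases h1 : b < h
    · rw [if_pos h1, if_pos (h1.trans hlt), if_pos (h1.trans hlt),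
        gapC_insert_of_lt _ _ _ _ h1 hlt hh, gapC_split _ _ _ _ h1 hlt hh]; ring
    · rw [if_neg h1, gapC_insert_of_le _ _ _ _ (not_lt.1 h1)]; ring
  rw [this]; ring

lemma numN_insert_gt (t : ℝ) (x : Fin n → ℝ) (P : Finset (Fin n)) (h a : Fin n) (hh : h ∉ P)
    (hlt : a < h) :
    numN t x (insert h P) a = numN t x P a := by
  unfold numN
  rw [Finset.sum_insert hh, if_neg (not_lt.2 hlt.le)]
  simp only [gapC_insert_of_ge _ _ _ _ hlt.le, zero_add]

lemma geom_finset (t : ℝ) (S : Finset (Fin n)) :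
    (1 - t) * ∑ a ∈ S, t ^ (S.filter fun c => c < a).card = 1 - t ^ S.card := by
  induction S using Finset.induction_on_max with
  | empty => simp
  | insert a s hs ih =>
    have ha : a ∉ s := fun h => lt_irrefl _ (hs a h)
    rw [Finset.sum_insert ha, Finset.card_insert_of_notMem ha, mul_add]
    have e1 : (insert a s).filter (fun c => c < a) = s := by
      ext c; simp only [Finset.mem_filter, Finset.mem_insert]; grind
    have e2 : ∑ b ∈ s, t ^ ((insert a s).filter fun c => c < b).card
        = ∑ b ∈ s, t ^ (s.filter fun c => c < b).card := by
      refine Finset.sum_congr rfl fun b hb => ?_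
      congr 2; ext c; simp only [Finset.mem_filter, Finset.mem_insert]
      have := hs b hb; grind
    rw [e1, e2, ih]; ring

lemma sum_numN (t : ℝ) (x : Fin n → ℝ) (hx1 : ∑ i, x i = 1) (P : Finset (Fin n)) :
    ∑ a ∈ Pᶜ, numN t x P a = denD t x P := by
  induction P using Finset.induction_on with
  | empty => simp [numN, denD, hx1]
  | insert h P hh ih =>
    rw [denD_insert _ _ _ _ hh, ← ih]
    have hm : h ∈ Pᶜ := by simpa using hh
    have e0 : (insert h P)ᶜ = Pᶜ.erase h := by ext; simp
    rw [e0, ← Finset.add_sum_erase _ _ hm]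
    have : ∀ a ∈ Pᶜ.erase h, numN t x (insert h P) a = numN t x P a +
        numN t x P h * ((1 - t) * if h < a then t ^ gapC P h a else 0) := by
      intro a ha
      have hne : a ≠ h := (Finset.mem_erase.1 ha).1
      split_ifs with hlt
      · rw [numN_insert_lt _ _ _ _ _ hh hlt]; ring
      · rw [numN_insert_gt _ _ _ _ _ hh (lt_of_le_of_ne (not_lt.1 hlt) hne)]; ring
    rw [Finset.sum_congr rfl this, Finset.sum_add_distrib, ← Finset.mul_sum, ← Finset.mul_sum,
      ← Finset.sum_filter]
    have g := geom_finset t (Finset.univ.filter fun c : Fin n => c ∉ P ∧ h < c)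
    have e1 : (Pᶜ.erase h).filter (fun a => h < a)
        = (Finset.univ.filter fun c : Fin n => c ∉ P ∧ h < c) := by
      ext c; simp; grind
    rw [e1]
    simp only [Finset.filter_filter] at g
    have e2 : ∑ a ∈ Finset.univ.filter (fun c : Fin n => c ∉ P ∧ h < c), t ^ gapC P h a =
      ∑ a ∈ Finset.univ.filter (fun c : Fin n => c ∉ P ∧ h < c),
       t ^ (Finset.univ.filter fun c : Fin n => (c ∉ P ∧ h < c) ∧ c < a).card := by
      refine Finset.sum_congr rfl fun a _ => ?_
      unfold gapC; simp only [and_assoc]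
    rw [e2, g]; unfold topC; ring

lemma numN_pos (t : ℝ) (ht0 : 0 ≤ t) (ht : t ≤ 1) (x : Fin n → ℝ) (hx : ∀ i, 0 < x i)
    (P : Finset (Fin n)) (a : Fin n) : 0 < numN t x P a := by
  unfold numN
  have : 0 ≤ ∑ b ∈ P, if b < a then x b * t ^ gapC P b a else 0 := by
    refine Finset.sum_nonneg fun b _ => ?_
    have := (hx b).le
    split_ifs <;> positivity
  have h2 : 0 ≤ 1 - t := by linarith
  have := hx a
  positivity

lemma denD_pos (t : ℝ) (ht0 : 0 ≤ t) (ht : t ≤ 1) (x : Fin n → ℝ) (hx : ∀ i, 0 < x i)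
    (hx1 : ∑ i, x i = 1) (P : Finset (Fin n)) (a : Fin n) (ha : a ∉ P) : 0 < denD t x P := by
  rw [← sum_numN t x hx1]
  exact Finset.sum_pos (fun a _ => numN_pos t ht0 ht x hx P a) ⟨a, by simpa using ha⟩

def facF (t : ℝ) (x : Fin n → ℝ) (P : Finset (Fin n)) (a : Fin n) : ℝ :=
  numN t x P a / denD t x P

def pre (k : ℕ) (σ : Equiv.Perm (Fin n)) : Finset (Fin n) :=
  Finset.univ.filter fun c => (σ.symm c : ℕ) < k

lemma mem_pre (k : ℕ) (σ : Equiv.Perm (Fin n)) (c : Fin n) :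
    c ∈ pre k σ ↔ (σ.symm c : ℕ) < k := by simp [pre]

def psi (t : ℝ) (x : Fin n → ℝ) (σ : Equiv.Perm (Fin n)) : ℝ :=
  ∏ k : Fin n, facF t x (pre k σ) (σ k)

def vv (q : ℝ) (x : Fin n → ℝ) (j : Fin n) (σ : Equiv.Perm (Fin n)) : ℝ :=
  q ^ topC (pre j σ) (σ j) * ∏ k ∈ Finset.univ.erase j, facF q⁻¹ x (pre k σ) (σ k)

lemma pre_succ (j : Fin n) (σ : Equiv.Perm (Fin n)) :
    pre ((j : ℕ) + 1) σ = insert (σ j) (pre j σ) := by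
  ext c
  rw [Finset.mem_insert, mem_pre, mem_pre, ← Equiv.symm_apply_eq, Fin.ext_iff]
  omega

lemma notMem_pre (k : ℕ) (j : Fin n) (hj : k ≤ j) (σ : Equiv.Perm (Fin n)) : σ j ∉ pre k σ := by
  rw [mem_pre]; simpa using hj

lemma pre_swap (k : ℕ) (i j : Fin n) (h : (k ≤ i ∧ k ≤ j) ∨ ((i:ℕ) < k ∧ (j:ℕ) < k))
    (σ : Equiv.Perm (Fin n)) : pre k (σ * Equiv.swap i j) = pre k σ := by
  ext c
  have : (σ * Equiv.swap i j).symm c = Equiv.swap i j (σ.symm c) := by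
    rw [Equiv.symm_apply_eq]; simp
  rw [mem_pre, mem_pre, this, Equiv.swap_apply_def]
  split_ifs with h1 h2
  · rw [h1]; omega
  · rw [h2]; omega
  · rfl

lemma core_desc (q : ℝ) (hq : q ≠ 0) (N1 D1 N2 D2 : ℝ) (k : ℕ) (hD1 : D1 ≠ 0) (hD2 : D2 ≠ 0)
   (e : D2 = D1 - q⁻¹ ^ k * N1) :
   q ^ k * (N2 / D2) = N1 / D1 * (N2 / D2) + N2 / D1 * q ^ k := by
  have hk : q ^ k ≠ 0 := pow_ne_zero _ hq
  have e' : N1 = q ^ k * (D1 - D2) := by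
    rw [e, inv_pow]; field_simp; ring
  rw [e']; field_simp; ring

lemma core_asc (q : ℝ) (hq : q ≠ 0) (N1 D1 N2 N3 D2 : ℝ) (g m : ℕ) (hD1 : D1 ≠ 0) (hD2 : D2 ≠ 0)
   (e : D2 = D1 - q⁻¹ ^ (g + 1 + m) * N1) (e3 : N3 = N2 + (1 - q⁻¹) * q⁻¹ ^ g * N1) :
   q ^ (g + 1 + m) * (N3 / D2) = N1 / D1 * (N3 / D2) + q * (N2 / D1 * q ^ (g + m))
     + (q - 1) * (N1 / D1 * q ^ m) := by
  have hk : q ^ g ≠ 0 := pow_ne_zero _ hq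
  have hm : q ^ m ≠ 0 := pow_ne_zero _ hq
  have e' : N1 = q ^ (g + 1 + m) * (D1 - D2) := by
    rw [e, inv_pow]; field_simp; ring
  have e2 : N2 = N3 - (1 - q⁻¹) * q⁻¹ ^ g * N1 := by rw [e3]; ring
  rw [e2, e', inv_pow]; field_simp; ring

lemma vv_step (q : ℝ) (hq : 1 ≤ q) (x : Fin n → ℝ) (hx : ∀ i, 0 < x i) (hx1 : ∑ i, x i = 1)
    (j : ℕ) (h : j + 1 < n) (σ : Equiv.Perm (Fin n)) :
    vv q x ⟨j, Nat.lt_of_succ_lt h⟩ σ = psi q⁻¹ x σ +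
      Matrix.vecMul (vv q x ⟨j + 1, h⟩) (genMat n q j) σ := by
  have hq0 : q ≠ 0 := by positivity
  have ht0 : 0 ≤ q⁻¹ := by positivity
  have ht1 : q⁻¹ ≤ 1 := inv_le_one_of_one_le₀ hq
  set i0 : Fin n := ⟨j, Nat.lt_of_succ_lt h⟩ with hi0
  set i1 : Fin n := ⟨j + 1, h⟩ with hi1
  have hne : i0 ≠ i1 := by simp [hi0, hi1]
  set s := Equiv.swap i0 i1 with hs
  have hss : ∀ τ : Equiv.Perm (Fin n), τ * s * s = τ := fun τ => by
    rw [mul_assoc, hs, Equiv.swap_mul_self, mul_one]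
  have hσs : ∀ π, (σ = π * s ↔ π = σ * s) := fun π =>
    ⟨fun e => by rw [e, hss], fun e => by rw [e, hss]⟩
  have s0 : (σ * s) i0 = σ i1 := by simp [hs]
  have s1 : (σ * s) i1 = σ i0 := by simp [hs]
  have hvec : Matrix.vecMul (vv q x i1) (genMat n q j) σ =
      if σ i0 < σ i1 then q * vv q x i1 (σ * s) + (q - 1) * vv q x i1 σ
      else vv q x i1 (σ * s) := by
    have hnes : σ * s ≠ σ := by
      intro e
      have := congrArg (fun τ : Equiv.Perm (Fin n) => τ i0) e
      simp only [s0] at this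
      exact hne (σ.injective this).symm
    have hsupp : ∀ π, vv q x i1 π * genMat n q j π σ =
        (if π = σ * s then vv q x i1 (σ * s) * (if σ i0 < σ i1 then q else 1) else 0)
        + (if π = σ then vv q x i1 σ * (if σ i0 < σ i1 then q - 1 else 0) else 0) := by
      intro π
      unfold genMat
      rw [dif_pos h]
      simp only [← hi0, ← hi1, ← hs, hσs]
      by_cases h1 : π = σ * s
      · subst h1
        simp only [s0, s1, if_true, hnes, hnes.symm, if_false]
        split_ifs <;> ring
      · by_cases h2 : π = σ
        · subst h2
          simp only [h1, if_false, if_true]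
          by_cases h3 : π i0 < π i1
          · simp [h3, not_lt.2 h3.le]
          · have : π i1 < π i0 := lt_of_le_of_ne (not_lt.1 h3) (fun e => hne (π.injective e.symm))
            simp [h3, this]
        · simp [h1, h2, Ne.symm h2]
    rw [Matrix.vecMul, dotProduct, Finset.sum_congr rfl fun π _ => hsupp π,
      Finset.sum_add_distrib, Finset.sum_ite_eq', Finset.sum_ite_eq']
    simp only [Finset.mem_univ, if_true]
    split_ifs <;> ring
  rw [hvec]
  -- the products
  have hp0 : ∀ τ : Equiv.Perm (Fin n), ∏ k ∈ Finset.univ.erase i0, facF q⁻¹ x (pre k τ) (τ k)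
      = facF q⁻¹ x (pre i1 τ) (τ i1) *
        ∏ k ∈ (Finset.univ.erase i0).erase i1, facF q⁻¹ x (pre k τ) (τ k) := fun τ =>
    (Finset.mul_prod_erase _ _ (by simp [hne.symm])).symm
  have hp1 : ∀ τ : Equiv.Perm (Fin n), ∏ k ∈ Finset.univ.erase i1, facF q⁻¹ x (pre k τ) (τ k)
      = facF q⁻¹ x (pre i0 τ) (τ i0) *
        ∏ k ∈ (Finset.univ.erase i0).erase i1, facF q⁻¹ x (pre k τ) (τ k) := fun τ => by
    rw [Finset.erase_right_comm]
    exact (Finset.mul_prod_erase _ _ (by simp [hne])).symm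
  have hpsi : psi q⁻¹ x σ = facF q⁻¹ x (pre i0 σ) (σ i0) * (facF q⁻¹ x (pre i1 σ) (σ i1) *
        ∏ k ∈ (Finset.univ.erase i0).erase i1, facF q⁻¹ x (pre k σ) (σ k)) := by
    rw [← hp0, psi]; exact (Finset.mul_prod_erase _ _ (by simp)).symm
  have hR : ∏ k ∈ (Finset.univ.erase i0).erase i1, facF q⁻¹ x (pre k (σ * s)) ((σ * s) k)
      = ∏ k ∈ (Finset.univ.erase i0).erase i1, facF q⁻¹ x (pre k σ) (σ k) := by
    refine Finset.prod_congr rfl fun k hk => ?_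
    simp only [Finset.mem_erase, Finset.mem_univ, and_true] at hk
    have hk0 : (k : ℕ) ≠ j := fun e => hk.2 (Fin.ext e)
    have hk1 : (k : ℕ) ≠ j + 1 := fun e => hk.1 (Fin.ext e)
    rw [hs, pre_swap _ _ _ (by simp only [hi0, hi1]; omega), Equiv.Perm.mul_apply,
      Equiv.swap_apply_of_ne_of_ne hk.2 hk.1]
  have hP0 : pre i0 (σ * s) = pre i0 σ := pre_swap _ _ _ (by simp [hi0, hi1]) σ
  have hP1 : pre i1 σ = insert (σ i0) (pre i0 σ) := pre_succ i0 σ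
  have hP1' : pre i1 (σ * s) = insert (σ i1) (pre i0 σ) := by
    rw [← hP0, ← s0]; exact pre_succ i0 (σ * s)
  unfold vv
  rw [hp0, hp1, hp1, hpsi, hR, hP0, hP1, hP1', s0, s1]
  have hn0 : σ i0 ∉ pre i0 σ := notMem_pre _ _ le_rfl σ
  have hn1 : σ i1 ∉ insert (σ i0) (pre i0 σ) := hP1 ▸ notMem_pre _ _ le_rfl σ
  have hn1' : σ i1 ∉ pre i0 σ := fun e => hn1 (Finset.mem_insert_of_mem e)
  generalize ∏ k ∈ (Finset.univ.erase i0).erase i1, facF q⁻¹ x (pre k σ) (σ k) = R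
  generalize hP : pre i0 σ = P at *
  have hab : σ i0 ≠ σ i1 := fun e => hne (σ.injective e)
  generalize σ i0 = a at *
  generalize σ i1 = b at *
  unfold facF
  have d1 := (denD_pos q⁻¹ ht0 ht1 x hx hx1 P a hn0).ne'
  have d2 := (denD_pos q⁻¹ ht0 ht1 x hx hx1 _ b hn1).ne'
  have e := denD_insert q⁻¹ x P a hn0
  split_ifs with hlt
  · have e3 := numN_insert_lt q⁻¹ x P a b hn0 hlt
    rw [topC_insert_of_le _ _ _ hlt.le, topC_insert_of_lt _ _ _ hlt hn1']
    rw [topC_split _ _ _ hlt hn1'] at e ⊢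
    linear_combination R * core_asc q hq0 _ _ _ _ _ _ _ d1 d2 e e3
  · have hlt' : b < a := lt_of_le_of_ne (not_lt.1 hlt) hab.symm
    rw [topC_insert_of_le _ _ _ hlt'.le]
    have e3 := numN_insert_gt q⁻¹ x P a b hn0 hlt'
    rw [e3]
    linear_combination R * core_desc q hq0 _ _ (numN q⁻¹ x P b) _ _ d1 d2 e

lemma facF_last (t : ℝ) (ht0 : 0 ≤ t) (ht1 : t ≤ 1) (x : Fin n → ℝ) (hx : ∀ i, 0 < x i)
    (hx1 : ∑ i, x i = 1) (σ : Equiv.Perm (Fin n)) (k : Fin n) (hk : (k : ℕ) + 1 = n) :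
    facF t x (pre k σ) (σ k) = 1 ∧ topC (pre k σ) (σ k) = 0 := by
  have hn0 : σ k ∉ pre k σ := notMem_pre _ _ le_rfl σ
  have hu : (pre k σ)ᶜ = {σ k} := by
    ext c
    rw [Finset.mem_compl, mem_pre, Finset.mem_singleton, ← Equiv.symm_apply_eq, Fin.ext_iff]
    have := (σ.symm c).isLt
    omega
  constructor
  · have d := (denD_pos t ht0 ht1 x hx hx1 _ _ hn0).ne'
    have := sum_numN t x hx1 (pre k σ)
    rw [hu, Finset.sum_singleton] at this
    rw [facF, this, div_self d]
  · unfold topC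
    rw [Finset.card_eq_zero, Finset.filter_eq_empty_iff]
    rintro c - ⟨h1, h2⟩
    rw [← Finset.mem_compl, hu, Finset.mem_singleton] at h1
    exact h2.ne' h1

lemma psi_stat (q : ℝ) (hq : 1 ≤ q) (x : Fin n → ℝ) (hx : ∀ i, 0 < x i) (hx1 : ∑ i, x i = 1)
    (hn : 1 ≤ n) : Matrix.vecMul (psi q⁻¹ x) (TSn n q x) = psi q⁻¹ x := by
  have hq0 : q ≠ 0 := by positivity
  have ht0 : 0 ≤ q⁻¹ := by positivity
  have ht1 : q⁻¹ ≤ 1 := inv_le_one_of_one_le₀ hq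
  have key : ∀ (j : ℕ) (h : j < n), vv q x ⟨0, hn⟩ =
      Matrix.vecMul (psi q⁻¹ x) (∑ k ∈ Finset.range j, prodGen n q k) +
        Matrix.vecMul (vv q x ⟨j, h⟩) (prodGen n q j) := by
    intro j
    induction j with
    | zero => intro h; simp [prodGen]
    | succ j ih =>
      intro h
      rw [ih (Nat.lt_of_succ_lt h), Finset.sum_range_succ, Matrix.vecMul_add, add_assoc, prodGen,
        ← Matrix.vecMul_vecMul, ← Matrix.add_vecMul]
      congr 2
      funext σ
      exact vv_step q hq x hx hx1 j h σ
  obtain ⟨m, rfl⟩ : ∃ m, n = m + 1 := ⟨n - 1, by omega⟩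
  have hlast : vv q x ⟨m, Nat.lt_succ_self m⟩ = psi q⁻¹ x := by
    funext σ
    obtain ⟨h1, h2⟩ := facF_last q⁻¹ ht0 ht1 x hx hx1 σ ⟨m, Nat.lt_succ_self m⟩ rfl
    rw [vv, h2, pow_zero, one_mul, psi, ← Finset.mul_prod_erase Finset.univ _ (Finset.mem_univ
      (⟨m, Nat.lt_succ_self m⟩ : Fin (m + 1))), h1, one_mul]
  have k1 := key m (Nat.lt_succ_self m)
  rw [hlast, ← Matrix.vecMul_add, ← Finset.sum_range_succ] at k1
  rw [TSn, ← Matrix.vecMul_vecMul, ← k1]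
  funext σ
  have hsupp : ∀ π, vv q x ⟨0, hn⟩ π * XSn (m+1) q x π σ = if π = σ then
      vv q x ⟨0, hn⟩ σ * (x (σ ⟨0, hn⟩) / q ^ (m + 1 - 1 - (σ ⟨0, hn⟩ : ℕ))) else 0 := by
    intro π
    unfold XSn
    by_cases h : π = σ
    · subst h; simp
    · simp [h, Ne.symm h]
  rw [Matrix.vecMul, dotProduct, Finset.sum_congr rfl fun π _ => hsupp π, Finset.sum_ite_eq',
    if_pos (Finset.mem_univ _), psi, ← Finset.mul_prod_erase Finset.univ _ (Finset.mem_univ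
      (⟨0, hn⟩ : Fin (m + 1))), vv]
  have hpe : pre 0 σ = ∅ := by ext c; simp [mem_pre]
  have ht : topC (∅ : Finset (Fin (m+1))) (σ ⟨0, hn⟩) = m + 1 - 1 - (σ ⟨0, hn⟩ : ℕ) := by
    unfold topC
    have : (Finset.univ.filter fun c : Fin (m+1) => c ∉ (∅ : Finset (Fin (m+1))) ∧ σ ⟨0, hn⟩ < c)
      = Finset.Ioi (σ ⟨0, hn⟩) := by ext c; simp
    rw [this, Fin.card_Ioi]
  have hf : facF q⁻¹ x ∅ (σ ⟨0, hn⟩) = x (σ ⟨0, hn⟩) := by simp [facF, numN, denD]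
  simp only [hpe, ht, hf]
  have : q ^ (m + 1 - 1 - (σ ⟨0, hn⟩ : ℕ)) ≠ 0 := pow_ne_zero _ hq0
  field_simp

lemma facF_pos (t : ℝ) (ht0 : 0 ≤ t) (ht1 : t ≤ 1) (x : Fin n → ℝ) (hx : ∀ i, 0 < x i)
    (hx1 : ∑ i, x i = 1) (σ : Equiv.Perm (Fin n)) (k : Fin n) :
    0 < facF t x (pre k σ) (σ k) :=
  div_pos (numN_pos t ht0 ht1 x hx _ _)
    (denD_pos t ht0 ht1 x hx hx1 _ _ (notMem_pre _ _ le_rfl σ))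

lemma psi_pos (t : ℝ) (ht0 : 0 ≤ t) (ht1 : t ≤ 1) (x : Fin n → ℝ) (hx : ∀ i, 0 < x i)
    (hx1 : ∑ i, x i = 1) (σ : Equiv.Perm (Fin n)) : 0 < psi t x σ :=
  Finset.prod_pos fun k _ => facF_pos t ht0 ht1 x hx hx1 σ k

lemma psi_sum (t : ℝ) (ht0 : 0 ≤ t) (ht1 : t ≤ 1) (x : Fin n → ℝ) (hx : ∀ i, 0 < x i)
    (hx1 : ∑ i, x i = 1) : ∑ σ, psi t x σ = 1 := by
  have key : ∀ j ≤ n, ∑ σ : Equiv.Perm (Fin n),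
      ∏ k ∈ Finset.univ.filter (fun k : Fin n => (k : ℕ) < j), facF t x (pre k σ) (σ k)
      = ((n - j).factorial : ℝ) := by
    intro j
    induction j with
    | zero => intro _; simp [Fintype.card_perm]
    | succ j ih =>
      intro hj
      have ihj := ih (by omega)
      set f : Equiv.Perm (Fin n) → ℝ := fun σ =>
        ∏ k ∈ Finset.univ.filter (fun k : Fin n => (k : ℕ) < j + 1), facF t x (pre k σ) (σ k)
        with hf
      set j0 : Fin n := ⟨j, hj⟩ with hj0
      have h1 : ∀ l : Fin n, ∑ σ, f (σ * Equiv.swap j0 l) = ∑ σ, f σ := fun l =>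
        Equiv.sum_comp (Equiv.mulRight (Equiv.swap j0 l)) f
      have h2 : ∑ l ∈ Finset.Ici j0, ∑ σ, f (σ * Equiv.swap j0 l) = ((n - j : ℕ) : ℝ) * ∑ σ, f σ := by
        rw [Finset.sum_congr rfl fun l _ => h1 l, Finset.sum_const, Fin.card_Ici, nsmul_eq_mul]
      have h3 : ∀ σ : Equiv.Perm (Fin n), ∑ l ∈ Finset.Ici j0, f (σ * Equiv.swap j0 l) =
          ∏ k ∈ Finset.univ.filter (fun k : Fin n => (k : ℕ) < j), facF t x (pre k σ) (σ k) := by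
        intro σ
        have hfil : Finset.univ.filter (fun k : Fin n => (k : ℕ) < j + 1) =
            insert j0 (Finset.univ.filter (fun k : Fin n => (k : ℕ) < j)) := by
          ext k; simp only [Finset.mem_filter, Finset.mem_univ, true_and, Finset.mem_insert,
            Fin.ext_iff, hj0]; omega
        have h4 : ∀ l ∈ Finset.Ici j0, f (σ * Equiv.swap j0 l) = facF t x (pre j σ) (σ l) *
           ∏ k ∈ Finset.univ.filter (fun k : Fin n => (k : ℕ) < j), facF t x (pre k σ) (σ k) := by
          intro l hl
          have hl' : j ≤ (l : ℕ) := by simpa [hj0, Fin.le_def] using hl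
          simp only [hf]
          rw [hfil, Finset.prod_insert (by simp [hj0])]
          congr 1
          · rw [pre_swap _ _ _ (Or.inl ⟨le_rfl, hl'⟩)]; simp [hj0]
          · refine Finset.prod_congr rfl fun k hk => ?_
            have hk' : (k : ℕ) < j := by simpa using hk
            rw [pre_swap _ _ _ (Or.inl ⟨by simp only [hj0]; omega, by omega⟩),
              Equiv.Perm.mul_apply, Equiv.swap_apply_of_ne_of_ne]
            · intro e; rw [e] at hk'; simp [hj0] at hk'
            · intro e; rw [e] at hk'; omega
        rw [Finset.sum_congr rfl h4, ← Finset.sum_mul]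
        have h5 : ∑ l ∈ Finset.Ici j0, facF t x (pre j σ) (σ l) = 1 := by
          have : ∑ l ∈ Finset.Ici j0, facF t x (pre j σ) (σ l) =
              ∑ a ∈ (pre j σ)ᶜ, facF t x (pre j σ) a := by
            refine Finset.sum_bij (fun l _ => σ l) ?_ ?_ ?_ ?_
            · intro l hl
              rw [Finset.mem_compl, mem_pre]
              simpa [hj0, Fin.le_def] using hl
            · intro a _ b _ e; exact σ.injective e
            · intro c hc
              rw [Finset.mem_compl, mem_pre] at hc
              exact ⟨σ.symm c, by simpa [hj0, Fin.le_def] using hc, by simp⟩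
            · intros; rfl
          rw [this]
          unfold facF
          rw [← Finset.sum_div, sum_numN t x hx1, div_self]
          exact (denD_pos t ht0 ht1 x hx hx1 _ (σ j0) (notMem_pre _ _ le_rfl σ)).ne'
        rw [h5, one_mul]
      rw [Finset.sum_comm, Finset.sum_congr rfl fun σ _ => h3 σ, ihj] at h2
      have h6 : n - j = (n - (j + 1)) + 1 := by omega
      have h7 : ((n - j : ℕ) : ℝ) ≠ 0 := by rw [h6]; positivity
      have h8 : ((n - j).factorial : ℝ) = ((n - j : ℕ) : ℝ) * ((n - (j + 1)).factorial : ℝ) := by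
        rw [h6, Nat.factorial_succ]; push_cast; ring
      rw [h8] at h2
      exact (mul_left_cancel₀ h7 h2).symm
  have := key n le_rfl
  simpa [psi] using this

/-! uniqueness -/

lemma genMat_nonneg (q : ℝ) (hq : 1 ≤ q) (k : ℕ) (π σ : Equiv.Perm (Fin n)) :
    0 ≤ genMat n q k π σ := by
  unfold genMat
  have : 0 ≤ q := by linarith
  have : 0 ≤ q - 1 := by linarith
  split_ifs <;> positivity

lemma prodGen_nonneg (q : ℝ) (hq : 1 ≤ q) (k : ℕ) : ∀ (π σ : Equiv.Perm (Fin n)),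
    0 ≤ prodGen n q k π σ := by
  induction k with
  | zero => intro π σ; simp only [prodGen, Matrix.one_apply]; split_ifs <;> norm_num
  | succ k ih =>
    intro π σ
    rw [prodGen, Matrix.mul_apply]
    exact Finset.sum_nonneg fun τ _ => mul_nonneg (genMat_nonneg q hq k π τ) (ih τ σ)

def sw (n k : ℕ) : Equiv.Perm (Fin n) :=
  if h : k + 1 < n then Equiv.swap ⟨k, Nat.lt_of_succ_lt h⟩ ⟨k + 1, h⟩ else 1

def cyc (n : ℕ) : ℕ → Equiv.Perm (Fin n)
  | 0 => 1
  | k + 1 => sw n k * cyc n k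

lemma prodGen_pos (q : ℝ) (hq : 1 ≤ q) (k : ℕ) : ∀ (_ : k < n) (π : Equiv.Perm (Fin n)),
    0 < prodGen n q k π (π * cyc n k) := by
  induction k with
  | zero => intro _ π; rw [prodGen, cyc, mul_one, Matrix.one_apply_eq]; exact one_pos
  | succ k ih =>
    intro h π
    rw [prodGen, Matrix.mul_apply]
    refine Finset.sum_pos' (fun τ _ => mul_nonneg (genMat_nonneg q hq k π τ)
      (prodGen_nonneg q hq k _ _)) ⟨π * sw n k, Finset.mem_univ _, mul_pos ?_ ?_⟩
    · unfold genMat sw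
      rw [dif_pos h, dif_pos h]
      have : 0 ≤ q - 1 := by linarith
      simp only [if_true]
      split_ifs <;> linarith
    · rw [cyc, ← mul_assoc]; exact ih (Nat.lt_of_succ_lt h) _

lemma TSn_apply (q : ℝ) (x : Fin n → ℝ) (hn : 1 ≤ n) (π σ : Equiv.Perm (Fin n)) :
    TSn n q x π σ = (∑ k ∈ Finset.range n, prodGen n q k π σ) *
      (x (σ ⟨0, hn⟩) / q ^ (n - 1 - (σ ⟨0, hn⟩ : ℕ))) := by
  rw [TSn, Matrix.mul_apply, Finset.sum_eq_single σ]
  · rw [Matrix.sum_apply]; unfold XSn; rw [if_pos rfl, dif_pos (show 0 < n from hn)]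
  · intro τ _ h; unfold XSn; rw [if_neg (Ne.symm h), mul_zero]
  · simp

lemma zero_of_zero (q : ℝ) (hq : 1 ≤ q) (x : Fin n → ℝ) (hx : ∀ i, 0 < x i) (hn : 1 ≤ n)
    (d : Equiv.Perm (Fin n) → ℝ) (hd : ∀ σ, 0 ≤ d σ) (hT : Matrix.vecMul d (TSn n q x) = d)
    (σ0 : Equiv.Perm (Fin n)) (h0 : d σ0 = 0) : ∀ σ, d σ = 0 := by
  have hq0 : 0 < q := by linarith
  have step : ∀ k < n, ∀ σ, d σ = 0 → d (σ * (cyc n k)⁻¹) = 0 := by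
    intro k hk σ h
    have hh := congrFun hT σ
    rw [h, Matrix.vecMul, dotProduct, Finset.sum_eq_zero_iff_of_nonneg] at hh
    · have h2 := hh (σ * (cyc n k)⁻¹) (Finset.mem_univ _)
      refine (mul_eq_zero.1 h2).resolve_right (ne_of_gt ?_)
      rw [TSn_apply q x hn]
      refine mul_pos (Finset.sum_pos' (fun k _ => prodGen_nonneg q hq k _ _)
        ⟨k, Finset.mem_range.2 hk, ?_⟩) (div_pos (hx _) (by positivity))
      have := prodGen_pos q hq k hk (σ * (cyc n k)⁻¹)
      rwa [inv_mul_cancel_right] at this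
    · intro τ _
      refine mul_nonneg (hd τ) ?_
      rw [TSn_apply q x hn]
      exact mul_nonneg (Finset.sum_nonneg fun k _ => prodGen_nonneg q hq k _ _)
        (div_nonneg (hx _).le (by positivity))
  have pw : ∀ k < n, ∀ m : ℕ, ∀ σ, d σ = 0 → d (σ * ((cyc n k)⁻¹) ^ m) = 0 := by
    intro k hk m
    induction m with
    | zero => intro σ h; simpa using h
    | succ m ih => intro σ h; rw [pow_succ, ← mul_assoc]; exact step k hk _ (ih σ h)
  have step' : ∀ k < n, ∀ σ, d σ = 0 → d (σ * cyc n k) = 0 := by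
    intro k hk σ h
    have := pw k hk (orderOf (cyc n k)⁻¹ - 1) σ h
    have e : ((cyc n k)⁻¹) ^ (orderOf (cyc n k)⁻¹ - 1) = cyc n k := by
      rw [← inv_inv (cyc n k), inv_inv (cyc n k)⁻¹]
      apply eq_inv_of_mul_eq_one_left
      rw [← pow_succ, Nat.sub_add_cancel (orderOf_pos _), pow_orderOf_eq_one]
    rwa [e] at this
  have hsw : ∀ k, k + 1 < n → ∀ σ, d σ = 0 → d (σ * sw n k) = 0 := by
    intro k hk σ h
    have h1 := step k (by omega) _ (step' (k+1) hk σ h)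
    rwa [cyc, ← mul_assoc, mul_inv_cancel_right] at h1
  obtain ⟨m, rfl⟩ : ∃ m, n = m + 1 := ⟨n - 1, by omega⟩
  have hall : ∀ g : Equiv.Perm (Fin (m+1)), ∀ σ, d σ = 0 → d (σ * g) = 0 := by
    intro g
    have hg : g ∈ Submonoid.closure (Set.range fun i : Fin m => Equiv.swap i.castSucc i.succ) := by
      rw [Equiv.Perm.mclosure_swap_castSucc_succ]; trivial
    induction hg using Submonoid.closure_induction with
    | mem g hg =>
      obtain ⟨i, rfl⟩ := hg
      intro σ h
      have := hsw i (by omega) σ h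
      rw [sw, dif_pos (by omega)] at this
      exact this
    | one => intro σ h; simpa using h
    | mul a b _ _ ha hb => intro σ h; rw [← mul_assoc]; exact hb _ (ha σ h)
  intro σ
  have := hall (σ0⁻¹ * σ) σ0 h0
  rwa [mul_inv_cancel_left] at this

lemma unique_stat (q : ℝ) (hq : 1 ≤ q) (x : Fin n → ℝ) (hx : ∀ i, 0 < x i) (hn : 1 ≤ n)
    (φ Ψ : Equiv.Perm (Fin n) → ℝ) (hφ : ∀ σ, 0 < φ σ) (hφ1 : ∑ σ, φ σ = 1)
    (hφT : Matrix.vecMul φ (TSn n q x) = φ) (hΨ1 : ∑ σ, Ψ σ = 1)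
    (hΨT : Matrix.vecMul Ψ (TSn n q x) = Ψ) : Ψ = φ := by
  obtain ⟨σ0, -, hmin⟩ := Finset.exists_min_image Finset.univ (fun σ => Ψ σ / φ σ)
    Finset.univ_nonempty
  set c := Ψ σ0 / φ σ0 with hc
  have hz := zero_of_zero q hq x hx hn (Ψ - c • φ) (fun σ => by
      have := hmin σ (Finset.mem_univ _)
      rw [le_div_iff₀ (hφ σ)] at this
      simpa using this)
    (by rw [Matrix.sub_vecMul, Matrix.smul_vecMul, hφT, hΨT]) σ0 (by
      have := (hφ σ0).ne'
      simp only [Pi.sub_apply, Pi.smul_apply, smul_eq_mul, hc]; field_simp; ring)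
  have hΨ : ∀ σ, Ψ σ = c * φ σ := fun σ => by
    have := hz σ; simp only [Pi.sub_apply, Pi.smul_apply, smul_eq_mul] at this; linarith
  have hc1 : c = 1 := by
    rw [Finset.sum_congr rfl fun σ _ => hΨ σ, ← Finset.mul_sum, hφ1] at hΨ1; linarith
  funext σ; rw [hΨ, hc1, one_mul]

end Alg

section Bridge

variable {n : ℕ}

def kapF (q : ℝ) (x : Fin n → ℝ) (B : Finset (Fin n)) : ℝ :=
  ∑ b ∈ B, x b * q ^ (((b : ℕ) : ℤ) + 1 - ((B.filter fun c => c ≤ b).card : ℤ))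

lemma kappa_sorted (q : ℝ) (x : Fin n → ℝ) (s : List (Fin n)) (hs : s.Pairwise (· > ·)) :
    ∑ i : Fin s.length, x (s.get i) * q ^ ((i : ℤ) + ((s.get i : ℕ) + 1) - s.length)
      = kapF q x s.toFinset := by
  induction s with
  | nil => simp [kapF]
  | cons a l ih =>
    rw [List.pairwise_cons] at hs
    have hal : a ∉ l.toFinset := fun h => lt_irrefl _ (hs.1 a (List.mem_toFinset.1 h))
    have hnd : l.Nodup := hs.2.imp fun h => ne_of_gt h
    rw [List.toFinset_cons, kapF, Finset.sum_insert hal]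
    have e := Fin.sum_univ_succ (n := l.length) (fun i : Fin (l.length + 1) =>
      x ((a :: l).get i) * q ^ ((i : ℤ) + (((a :: l).get i : ℕ) + 1) - (l.length + 1 : ℕ)))
    refine e.trans ?_
    congr 1
    · have : (insert a l.toFinset).filter (fun c => c ≤ a) = insert a l.toFinset := by
        rw [Finset.filter_eq_self]
        intro c hc
        rcases Finset.mem_insert.1 hc with rfl | hc
        · exact le_rfl
        · exact (hs.1 c (List.mem_toFinset.1 hc)).le
      rw [this, Finset.card_insert_of_notMem hal, List.toFinset_card_of_nodup hnd]
      simp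
    · have e2 : ∑ b ∈ l.toFinset, x b * q ^ (((b : ℕ) : ℤ) + 1 -
          (((insert a l.toFinset).filter fun c => c ≤ b).card : ℤ)) = kapF q x l.toFinset := by
        refine Finset.sum_congr rfl fun b hb => ?_
        rw [Finset.filter_insert, if_neg (not_le.2 (hs.1 b (List.mem_toFinset.1 hb)))]
      rw [e2, ← ih hs.2]
      refine Finset.sum_congr rfl fun i _ => ?_
      simp only [List.get_eq_getElem, Fin.val_succ, List.getElem_cons_succ]
      congr 2
      push_cast
      ring

lemma kappa_eq (q : ℝ) (x : Fin n → ℝ) (b : List (Fin n)) (hb : b.Nodup) :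
    kappa q x b = kapF q x b.toFinset := by
  have hp : (b.insertionSort (fun a c => c ≤ a)).Perm b := List.perm_insertionSort _ _
  have h1 : (b.insertionSort (fun a c => c ≤ a)).Pairwise (fun a c => c ≤ a) :=
    List.pairwise_insertionSort _ _
  have h2 : (b.insertionSort (fun a c => c ≤ a)).Nodup := hp.nodup_iff.2 hb
  have h3 : (b.insertionSort (fun a c => c ≤ a)).Pairwise (· > ·) :=
    (h1.and h2).imp fun h => lt_of_le_of_ne h.1 h.2.symm
  rw [← List.toFinset_eq_of_perm _ _ hp]
  exact kappa_sorted q x _ h3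

lemma kapF_univ (q : ℝ) (x : Fin n → ℝ) : kapF q x Finset.univ = ∑ i, x i := by
  refine Finset.sum_congr rfl fun b _ => ?_
  have : (Finset.univ.filter fun c : Fin n => c ≤ b) = Finset.Iic b := by ext; simp
  rw [this, Fin.card_Iic]
  simp

lemma card_pre (k : Fin n) (σ : Equiv.Perm (Fin n)) : (pre k σ).card = k := by
  have : pre k σ = (Finset.Iio k).map σ.toEmbedding := by
    ext c
    rw [mem_pre]
    simp [Finset.mem_map_equiv]
  rw [this, Finset.card_map, Fin.card_Iio]

lemma card_compl_split (P : Finset (Fin n)) (b : Fin n) :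
    topC P b + P.card + (b : ℕ) + 1 = n + (P.filter fun c => c ≤ b).card := by
  have h1 : (P.filter fun c => c ≤ b).card + (P.filter fun c => ¬ c ≤ b).card = P.card :=
    Finset.card_filter_add_card_filter_not _
  have h2 : topC P b + (P.filter fun c => ¬ c ≤ b).card = n - 1 - b := by
    rw [← Fin.card_Ioi, topC, ← Finset.card_union_of_disjoint]
    · congr 1; ext c; simp; grind
    · rw [Finset.disjoint_left]; intro c; simp; grind
  have := b.isLt
  omega

lemma den_eq (q : ℝ) (hq : q ≠ 0) (x : Fin n → ℝ) (hx1 : ∑ i, x i = 1)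
    (σ : Equiv.Perm (Fin n)) (k : Fin n) :
    kappa q x (List.finRange n) - q ^ (((k : ℕ) : ℤ) - (n : ℤ)) * kappa q x (prefixVals σ k)
      = denD q⁻¹ x (pre k σ) := by
  have hnd : (prefixVals σ k).Nodup :=
    ((List.nodup_finRange n).filter _).map σ.injective
  have hset : (prefixVals σ k).toFinset = pre k σ := by
    ext c
    simp only [prefixVals, List.mem_toFinset, List.mem_map, List.mem_filter, List.mem_finRange,
      true_and, decide_eq_true_eq, mem_pre]
    constructor
    · rintro ⟨a, h, rfl⟩; simpa using h
    · intro h; exact ⟨σ.symm c, h, by simp⟩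
  have huniv : (List.finRange n).toFinset = Finset.univ := by ext; simp
  rw [kappa_eq _ _ _ (List.nodup_finRange n), kappa_eq _ _ _ hnd, hset, huniv, kapF_univ, hx1, denD,
    kapF, Finset.mul_sum]
  congr 1
  refine Finset.sum_congr rfl fun b _ => ?_
  rw [mul_left_comm, ← zpow_add₀ hq, inv_pow, ← zpow_natCast, ← zpow_neg]
  have := card_compl_split (pre k σ) b
  rw [card_pre] at this
  congr 2
  omega

def lowC (P : Finset (Fin n)) (a : Fin n) : ℕ :=
  (Finset.univ.filter fun c : Fin n => c ∉ P ∧ c < a).card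

lemma lowC_eq (P : Finset (Fin n)) (a : Fin n) :
    lowC P a + (P.filter fun c => c < a).card = a := by
  conv_rhs => rw [← Fin.card_Iio a]
  rw [lowC, ← Finset.card_union_of_disjoint]
  · congr 1; ext c; simp; grind
  · rw [Finset.disjoint_left]; intro c; simp; grind

lemma lowC_split (P : Finset (Fin n)) (b a : Fin n) (hb : b < a) :
    lowC P a + (P.filter fun c => c ≤ b).card = gapC P b a + b + 1 := by
  have h2 : lowC P a = gapC P b a + (Finset.univ.filter fun c : Fin n => c ∉ P ∧ c ≤ b).card := by
    rw [lowC, gapC, ← Finset.card_union_of_disjoint]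
    · congr 1; ext c; simp; grind
    · rw [Finset.disjoint_left]; intro c; simp; grind
  have h3 : (Finset.univ.filter fun c : Fin n => c ∉ P ∧ c ≤ b).card
      + (P.filter fun c => c ≤ b).card = b + 1 := by
    rw [← Fin.card_Iic, ← Finset.card_union_of_disjoint]
    · congr 1; ext c; simp; grind
    · rw [Finset.disjoint_left]; intro c; simp; grind
  omega

lemma num_eq (q : ℝ) (hq : q ≠ 0) (x : Fin n → ℝ) (P B : Finset (Fin n)) (a : Fin n)
    (ha : a ∉ B) (hB : ∀ c < a, c ∈ B ↔ c ∈ P) :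
    kapF q x (insert a B) - q⁻¹ * kapF q x B = q ^ lowC P a * numN q⁻¹ x P a := by
  have hfil : ∀ b < a, (B.filter fun c => c ≤ b) = P.filter fun c => c ≤ b := by
    intro b hb; ext c; simp only [Finset.mem_filter]
    constructor
    · rintro ⟨h, h'⟩; exact ⟨(hB c (lt_of_le_of_lt h' hb)).1 h, h'⟩
    · rintro ⟨h, h'⟩; exact ⟨(hB c (lt_of_le_of_lt h' hb)).2 h, h'⟩
  have hfila : ((insert a B).filter fun c => c ≤ a).card = (P.filter fun c => c < a).card + 1 := by
    have : (insert a B).filter (fun c => c ≤ a) = insert a (P.filter fun c => c < a) := by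
      ext c; simp only [Finset.mem_filter, Finset.mem_insert]
      have := hB c
      grind
    rw [this, Finset.card_insert_of_notMem (by simp)]
  have hterm : ∀ b ∈ B, x b * q ^ (((b : ℕ) : ℤ) + 1 -
        (((insert a B).filter fun c => c ≤ b).card : ℤ))
      - q⁻¹ * (x b * q ^ (((b : ℕ) : ℤ) + 1 - ((B.filter fun c => c ≤ b).card : ℤ)))
      = if b < a then q ^ lowC P a * ((1 - q⁻¹) * (x b * q⁻¹ ^ gapC P b a)) else 0 := by
    intro b hb
    split_ifs with hlt
    · rw [Finset.filter_insert, if_neg (not_le.2 hlt), hfil b hlt]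
      have h1 := lowC_split P b a hlt
      have h2 : ((b : ℕ) : ℤ) + 1 - ((P.filter fun c => c ≤ b).card : ℤ)
          = (lowC P a : ℤ) - (gapC P b a : ℤ) := by omega
      rw [h2, zpow_sub₀ hq, zpow_natCast, zpow_natCast, inv_pow]
      ring
    · rw [Finset.filter_insert, if_pos (not_lt.1 hlt), Finset.card_insert_of_notMem (by simp [ha])]
      push_cast
      have : ((b : ℕ) : ℤ) + 1 - (((B.filter fun c => c ≤ b).card : ℤ) + 1) =
        (((b : ℕ) : ℤ) + 1 - ((B.filter fun c => c ≤ b).card : ℤ)) - 1 := by ring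
      rw [this, zpow_sub_one₀ hq]
      ring
  rw [kapF, kapF, Finset.sum_insert ha, hfila, Finset.mul_sum, add_sub_assoc,
    ← Finset.sum_sub_distrib, Finset.sum_congr rfl hterm, numN, mul_add]
  have h1 := lowC_eq P a
  have h2 : ((a : ℕ) : ℤ) + 1 - (((P.filter fun c => c < a).card + 1 : ℕ) : ℤ) = (lowC P a : ℤ) := by
    push_cast; omega
  rw [h2, zpow_natCast, mul_comm (x a)]
  congr 1
  rw [← Finset.sum_filter, ← Finset.sum_filter, ← Finset.mul_sum, ← Finset.mul_sum]
  congr 3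
  ext c
  simp only [Finset.mem_filter]
  have := hB c
  grind

lemma num_lrm (q : ℝ) (hq : q ≠ 0) (x : Fin n → ℝ) (σ : Equiv.Perm (Fin n)) (k : Fin n)
    (h : isLRM σ k) :
    kappa q x [σ k] = q ^ lowC (pre k σ) (σ k) * numN q⁻¹ x (pre k σ) (σ k) := by
  rw [← num_eq q hq x _ ∅ _ (by simp), kappa_eq _ _ _ (by simp)]
  · simp [kapF]
  · intro c hc
    simp only [Finset.notMem_empty, mem_pre, false_iff, not_lt]
    by_contra! hlt
    have := h (σ.symm c) hlt
    rw [Equiv.apply_symm_apply] at this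
    exact lt_asymm hc this

lemma num_nlrm (q : ℝ) (hq : q ≠ 0) (x : Fin n → ℝ) (σ : Equiv.Perm (Fin n)) (k : Fin n)
    (h : ¬ isLRM σ k) :
    kappa q x (segTo σ k) - q⁻¹ * kappa q x (segBefore σ k)
      = q ^ lowC (pre k σ) (σ k) * numN q⁻¹ x (pre k σ) (σ k) := by
  have hnd1 : (segTo σ k).Nodup := ((List.nodup_finRange n).filter _).map σ.injective
  have hnd2 : (segBefore σ k).Nodup := ((List.nodup_finRange n).filter _).map σ.injective
  have hp : pMin σ k ≤ k := by
    unfold isLRM at h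
    push Not at h
    obtain ⟨i, hi, hle⟩ := h
    have hlt : σ i < σ k := lt_of_le_of_ne hle (fun e => hi.ne (σ.injective e))
    have : pMin σ k ≤ i := Nat.sInf_le ⟨i.isLt, hi, hlt⟩
    exact this.trans (Fin.le_def.1 hi.le)
  have hm2 : ∀ c, c ∈ (segBefore σ k).toFinset ↔
      pMin σ k ≤ (σ.symm c : ℕ) ∧ (σ.symm c : ℕ) < k := by
    intro c
    simp only [segBefore, List.mem_toFinset, List.mem_map, List.mem_filter, List.mem_finRange,
      true_and, decide_eq_true_eq]
    constructor
    · rintro ⟨a, h, rfl⟩; simpa using h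
    · intro h; exact ⟨σ.symm c, h, by simp⟩
  have hm1 : ∀ c, c ∈ (segTo σ k).toFinset ↔
      pMin σ k ≤ (σ.symm c : ℕ) ∧ (σ.symm c : ℕ) ≤ k := by
    intro c
    simp only [segTo, List.mem_toFinset, List.mem_map, List.mem_filter, List.mem_finRange,
      true_and, decide_eq_true_eq]
    constructor
    · rintro ⟨a, h, rfl⟩; simpa using h
    · intro h; exact ⟨σ.symm c, h, by simp⟩
  have hins : (segTo σ k).toFinset = insert (σ k) (segBefore σ k).toFinset := by
    ext c
    rw [Finset.mem_insert, hm1, hm2, ← Equiv.symm_apply_eq, Fin.ext_iff]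
    omega
  rw [kappa_eq _ _ _ hnd1, kappa_eq _ _ _ hnd2, hins]
  apply num_eq q hq
  · rw [hm2]; simp
  · intro c hc
    rw [hm2, mem_pre]
    refine ⟨fun h => h.2, fun h => ⟨Nat.sInf_le ⟨(σ.symm c).isLt, h, ?_⟩, h⟩⟩
    simpa using hc

lemma inv_eq (σ : Equiv.Perm (Fin n)) :
    invCount σ = ∑ k : Fin n, lowC (pre k σ) (σ k) := by
  unfold invCount
  rw [Finset.card_eq_sum_card_fiberwise (f := Prod.fst) (t := Finset.univ) (by simp)]
  refine Finset.sum_congr rfl fun k _ => ?_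
  unfold lowC
  refine Finset.card_bij (fun p _ => σ p.2) ?_ ?_ ?_
  · rintro ⟨a, b⟩ h
    simp only [Finset.mem_filter, Finset.mem_univ, true_and] at h
    obtain ⟨⟨h1, h2⟩, rfl⟩ := h
    simp only [Finset.mem_filter, Finset.mem_univ, true_and, mem_pre]
    refine ⟨?_, h2⟩
    simpa using h1.le
  · rintro ⟨a, b⟩ h ⟨a', b'⟩ h' e
    simp only [Finset.mem_filter, Finset.mem_univ, true_and] at h h'
    obtain ⟨-, rfl⟩ := h
    obtain ⟨-, rfl⟩ := h'
    simp only at e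
    rw [σ.injective e]
  · intro c hc
    simp only [Finset.mem_filter, Finset.mem_univ, true_and, mem_pre, not_lt] at hc
    refine ⟨(k, σ.symm c), ?_, by simp⟩
    simp only [Finset.mem_filter, Finset.mem_univ, true_and, and_true, Equiv.apply_symm_apply]
    refine ⟨lt_of_le_of_ne hc.1 ?_, hc.2⟩
    rintro e
    have := hc.2
    rw [e, Equiv.apply_symm_apply] at this
    exact lt_irrefl _ this

lemma psiFormula_eq (q : ℝ) (hq : 1 ≤ q) (x : Fin n → ℝ) (hx : ∀ i, 0 < x i)
    (hx1 : ∑ i, x i = 1) (σ : Equiv.Perm (Fin n)) : psiFormula n q x σ = psi q⁻¹ x σ := by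
  have hq0 : q ≠ 0 := by positivity
  have ht0 : 0 ≤ q⁻¹ := by positivity
  have ht1 : q⁻¹ ≤ 1 := inv_le_one_of_one_le₀ hq
  unfold psiFormula
  have hsplit : ∀ f : Fin n → ℝ, (∏ k ∈ Finset.univ.filter (fun k : Fin n => (k : ℕ) + 1 < n), f k)
      = (∏ k ∈ Finset.univ.filter (fun k : Fin n => (k : ℕ) + 1 < n ∧ isLRM σ k), f k) *
        (∏ k ∈ Finset.univ.filter (fun k : Fin n => (k : ℕ) + 1 < n ∧ ¬ isLRM σ k), f k) := by
    intro f
    rw [← Finset.filter_filter, ← Finset.filter_filter, Finset.prod_filter_mul_prod_filter_not]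
  rw [Finset.prod_congr rfl fun k hk => num_lrm q hq0 x σ k (Finset.mem_filter.1 hk).2.2]
  rw [Finset.prod_congr rfl fun k hk => num_nlrm q hq0 x σ k (Finset.mem_filter.1 hk).2.2]
  rw [Finset.prod_congr rfl fun k _ => den_eq q hq0 x hx1 σ k, ← hsplit, mul_div_assoc,
    ← Finset.prod_div_distrib]
  have hlow : ∀ k : Fin n, ¬ ((k : ℕ) + 1 < n) → lowC (pre k σ) (σ k) = 0 := by
    intro k hk
    unfold lowC
    rw [Finset.card_eq_zero, Finset.filter_eq_empty_iff]
    rintro c - ⟨h1, h2⟩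
    rw [mem_pre] at h1
    have : σ.symm c = k := by
      rw [Fin.ext_iff]
      have := (σ.symm c).isLt
      have := k.isLt
      omega
    rw [← this, Equiv.apply_symm_apply] at h2
    exact lt_irrefl _ h2
  have hfull : ∏ k ∈ Finset.univ.filter (fun k : Fin n => (k : ℕ) + 1 < n),
      (q ^ lowC (pre k σ) (σ k) * numN q⁻¹ x (pre k σ) (σ k) / denD q⁻¹ x (pre k σ))
      = ∏ k : Fin n, q ^ lowC (pre k σ) (σ k) * facF q⁻¹ x (pre k σ) (σ k) := by
    rw [Finset.prod_filter]
    refine Finset.prod_congr rfl fun k _ => ?_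
    split_ifs with h
    · rw [facF, mul_div_assoc]
    · rw [hlow k h, (facF_last q⁻¹ ht0 ht1 x hx hx1 σ k (by omega)).1]; simp
  rw [hfull, Finset.prod_mul_distrib, Finset.prod_pow_eq_pow_sum, ← inv_eq, zpow_neg, zpow_natCast,
    inv_mul_cancel_left₀ (pow_ne_zero _ hq0), psi]

end Bridge

/-- For `n ≥ 1`, real `q ≥ 1` and positive weights `x` summing to `1`,
the q-Tsetlin library operator `T_{S_n}(q,x)` has a unique stationary distribution, and any
stationary distribution is given componentwise by the product formula `psiFormula`. -/
theorem qTsetlin_perm_stationary (n : ℕ) (hn : 1 ≤ n) (q : ℝ) (hq : 1 ≤ q)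
    (x : Fin n → ℝ) (hx : ∀ i, 0 < x i) (hx1 : ∑ i, x i = 1) :
    (∃! Ψ : Equiv.Perm (Fin n) → ℝ, IsStationary (TSn n q x) (∑ i, x i) Ψ) ∧
    (∀ Ψ : Equiv.Perm (Fin n) → ℝ, IsStationary (TSn n q x) (∑ i, x i) Ψ →
      ∀ π : Equiv.Perm (Fin n), Ψ π = psiFormula n q x π) := by
  have ht0 : 0 ≤ q⁻¹ := by positivity
  have ht1 : q⁻¹ ≤ 1 := inv_le_one_of_one_le₀ hq
  have hpos := psi_pos q⁻¹ ht0 ht1 x hx hx1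
  have hsum := psi_sum q⁻¹ ht0 ht1 x hx hx1
  have hst := psi_stat q hq x hx hx1 hn
  have huniq : ∀ Ψ : Equiv.Perm (Fin n) → ℝ, IsStationary (TSn n q x) (∑ i, x i) Ψ →
      Ψ = psi q⁻¹ x := by
    rintro Ψ ⟨-, h1, h2⟩
    rw [hx1, one_smul] at h2
    exact unique_stat q hq x hx hn _ Ψ hpos hsum hst h1 h2
  refine ⟨⟨psi q⁻¹ x, ⟨fun σ => (hpos σ).le, hsum, by rw [hx1, one_smul]; exact hst⟩, huniq⟩, ?_⟩
  intro Ψ hΨ π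
  rw [huniq Ψ hΨ, psiFormula_eq q hq x hx hx1]

end QTsetlin
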